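/- arXiv:2602.11109 — 2 statements merged into one kernel-verified Lean document; each statement's English description precedes it below -/
import Mathlib

section
/- Let H be a separable real Hilbert space, let T > 0 and N ∈ ℕ with N ≥ 1, set Δt := T/N and t_j := j·Δt, and let f : [0, T] → H satisfy ‖f(s) − f(t)‖ ≤ L·|s − t|^α for all s, t ∈ [0, T], for some constants L ≥ 0 and α ∈ (0, 1]. Let ξ_1, …, ξ_N be independent random variables on a probability space (Ω, F, P), each uniformly distributed on [0, 1]. Then E[‖∑_{j=1}^{N} Δt · f(t_{j−1} + ξ_j Δt) − ∫_0^T f(τ) dτ‖²] ≤ T · L² · Δt^{1 + 2α}. -/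
open MeasureTheory ProbabilityTheory

theorem rrs_continuousOn {H : Type*} [NormedAddCommGroup H] (T : ℝ)
    (f : ℝ → H) (L α : ℝ) (hα : 0 < α)
    (hf : ∀ s ∈ Set.Icc (0:ℝ) T, ∀ t ∈ Set.Icc (0:ℝ) T, ‖f s - f t‖ ≤ L * |s - t| ^ α) :
    ContinuousOn f (Set.Icc 0 T) := by
  intro t ht
  rw [ContinuousWithinAt, tendsto_iff_norm_sub_tendsto_zero]
  have hc : Continuous fun s : ℝ => L * |s - t| ^ α :=
    continuous_const.mul ((by fun_prop : Continuous fun s : ℝ => |s - t|).rpow_const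
      (fun _ => Or.inr hα.le))
  have h0 : Filter.Tendsto (fun s : ℝ => L * |s - t| ^ α) (nhdsWithin t (Set.Icc 0 T))
      (nhds 0) := by
    have := (hc.tendsto t).mono_left (nhdsWithin_le_nhds (s := Set.Icc 0 T))
    simpa [Real.zero_rpow hα.ne'] using this
  refine squeeze_zero' (Filter.Eventually.of_forall fun _ => norm_nonneg _) ?_ h0
  filter_upwards [self_mem_nhdsWithin] with s hs using hf s hs t ht

/-- Mean-square bound for a sum of independent centred bounded vectors. -/
theorem rrs_sum_sq {Ω H : Type*} {mΩ : MeasurableSpace Ω} (P : Measure Ω)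
    [IsProbabilityMeasure P]
    [NormedAddCommGroup H] [InnerProductSpace ℝ H] [CompleteSpace H]
    [SecondCountableTopology H] (N : ℕ) (ξ : Fin N → Ω → ℝ) (hξmeas : ∀ j, Measurable (ξ j))
    (hξindep : iIndepFun ξ P) (φ : Fin N → ℝ → H) (hφ : ∀ j, Continuous (φ j)) (C : ℝ)
    (hb : ∀ j, ∀ᵐ ω ∂P, ‖φ j (ξ j ω)‖ ≤ C) (h0 : ∀ j, ∫ ω, φ j (ξ j ω) ∂P = 0) :
    ∫ ω, ‖∑ j, φ j (ξ j ω)‖ ^ 2 ∂P ≤ N * C ^ 2 := by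
  borelize H
  have hm : ∀ j, AEStronglyMeasurable (fun ω => φ j (ξ j ω)) P := fun j =>
    (((hφ j).measurable.comp (hξmeas j))).aestronglyMeasurable
  have hint : ∀ j, Integrable (fun ω => φ j (ξ j ω)) P := fun j =>
    Integrable.of_bound (hm j) C (hb j)
  have hin : ∀ i j, Integrable (fun ω => inner ℝ (φ i (ξ i ω)) (φ j (ξ j ω))) P := by
    intro i j
    refine Integrable.of_bound ((hm i).inner (hm j)) (C * C) ?_
    filter_upwards [hb i, hb j] with ω h1 h2
    exact (norm_inner_le_norm _ _).trans
      (mul_le_mul h1 h2 (norm_nonneg _) ((norm_nonneg _).trans h1))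
  have hexp : ∀ ω, ‖∑ j, φ j (ξ j ω)‖ ^ 2
      = ∑ i, ∑ j, inner ℝ (φ i (ξ i ω)) (φ j (ξ j ω)) := by
    intro ω
    rw [← real_inner_self_eq_norm_sq, sum_inner]
    simp_rw [inner_sum]
  simp_rw [hexp]
  rw [integral_finsetSum _ (fun i _ => integrable_finsetSum _ fun j _ => hin i j)]
  have hi : ∀ i, ∫ ω, ∑ j, inner ℝ (φ i (ξ i ω)) (φ j (ξ j ω)) ∂P ≤ C ^ 2 := by
    intro i
    rw [integral_finsetSum _ (fun j _ => hin i j), Finset.sum_eq_single i]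
    · have : ∫ ω, inner ℝ (φ i (ξ i ω)) (φ i (ξ i ω)) ∂P ≤ ∫ _ω, C ^ 2 ∂P := by
        refine integral_mono_ae (hin i i) (integrable_const _) ?_
        filter_upwards [hb i] with ω h1
        rw [real_inner_self_eq_norm_sq]
        exact pow_le_pow_left₀ (norm_nonneg _) h1 2
      simpa using this
    · intro j _ hji
      have hXY : IndepFun (ξ i) (ξ j) P := hξindep.indepFun hji.symm
      have := hXY.integral_bilin_comp_comp (f := φ i) (g := φ j) (hξmeas i).aemeasurable
        (hξmeas j).aemeasurable
        ((integrable_map_measure (hφ i).aestronglyMeasurable (hξmeas i).aemeasurable).2 (hint i))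
        ((integrable_map_measure (hφ j).aestronglyMeasurable (hξmeas j).aemeasurable).2 (hint j))
        (innerSL ℝ)
      rw [h0, h0, map_zero] at this
      exact this
    · simp
  calc _ ≤ ∑ _i : Fin N, C ^ 2 := Finset.sum_le_sum fun i _ => hi i
    _ = _ := by simp

theorem rrs_cont
    {Ω H : Type*} {mΩ : MeasurableSpace Ω} (P : Measure Ω) [IsProbabilityMeasure P]
    [NormedAddCommGroup H] [InnerProductSpace ℝ H] [CompleteSpace H]
    [SecondCountableTopology H]
    (T : ℝ) (hT : 0 < T) (N : ℕ) (hN : 1 ≤ N)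
    (f : ℝ → H) (hfc : Continuous f) (L α : ℝ) (hL : 0 ≤ L) (hα : α ∈ Set.Ioc (0:ℝ) 1)
    (hf : ∀ s ∈ Set.Icc (0:ℝ) T, ∀ t ∈ Set.Icc (0:ℝ) T, ‖f s - f t‖ ≤ L * |s - t| ^ α)
    (ξ : Fin N → Ω → ℝ) (hξmeas : ∀ j, Measurable (ξ j))
    (hξindep : iIndepFun ξ P)
    (hξunif : ∀ j, Measure.map (ξ j) P = (volume : Measure ℝ).restrict (Set.Icc 0 1))
    (hmem : ∀ j, ∀ᵐ ω ∂P, ξ j ω ∈ Set.Icc (0:ℝ) 1) (d : ℝ) (hd0 : 0 < d) (hd : N * d = T) :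
    ∫ ω, ‖(∑ j : Fin N, d • f ((j : ℝ) * d + ξ j ω * d))
        - ∫ τ in (0:ℝ)..T, f τ‖ ^ 2 ∂P
      ≤ T * L ^ 2 * d ^ (1 + 2 * α) := by
  have hsum : ∑ j : Fin N, ∫ τ in ((j : ℝ) * d)..((j : ℝ) * d + d), f τ
      = ∫ τ in (0:ℝ)..T, f τ := by
    have := intervalIntegral.sum_integral_adjacent_intervals (f := f) (μ := volume)
      (a := fun k : ℕ => (k : ℝ) * d) (n := N)
      (fun k _ => hfc.intervalIntegrable _ _)
    simp only [Nat.cast_zero, zero_mul, hd] at this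
    rw [← this, Finset.sum_range]
    refine Finset.sum_congr rfl fun j _ => ?_
    push_cast
    rw [add_mul, one_mul]
  let φ : Fin N → ℝ → H := fun j x =>
    d • f ((j : ℝ) * d + x * d) - ∫ τ in ((j : ℝ) * d)..((j : ℝ) * d + d), f τ
  have hφ : ∀ j, Continuous (φ j) := fun j => by
    simp only [φ]
    fun_prop
  have hjd : ∀ j : Fin N, (j : ℝ) * d + d ≤ T := by
    intro j
    have : ((j : ℝ) + 1) ≤ N := by exact_mod_cast j.2
    nlinarith
  have hj0 : ∀ j : Fin N, 0 ≤ (j : ℝ) * d := fun j => by positivity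
  have hbd : ∀ j, ∀ x ∈ Set.Icc (0:ℝ) 1, ‖φ j x‖ ≤ L * d ^ α * d := by
    intro j x hx
    have h1 : φ j x = ∫ τ in ((j : ℝ) * d)..((j : ℝ) * d + d),
        (f ((j : ℝ) * d + x * d) - f τ) := by
      rw [intervalIntegral.integral_sub (by simp) (hfc.intervalIntegrable _ _)]
      simp [φ]
    rw [h1]
    have hxd0 : 0 ≤ x * d := mul_nonneg hx.1 hd0.le
    have hxd1 : x * d ≤ d := by nlinarith [hx.2]
    have := intervalIntegral.norm_integral_le_of_norm_le_const
      (f := fun τ => f ((j : ℝ) * d + x * d) - f τ) (C := L * d ^ α)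
      (a := (j : ℝ) * d) (b := (j : ℝ) * d + d) (by
        intro τ hτ
        rw [Set.uIoc_of_le (by linarith)] at hτ
        have a1 := hj0 j
        have a2 := hjd j
        refine (hf _ ⟨by linarith, by linarith⟩ _
          ⟨by linarith [hτ.1], by linarith [hτ.2]⟩).trans ?_
        refine mul_le_mul_of_nonneg_left ?_ hL
        refine Real.rpow_le_rpow (abs_nonneg _) ?_ hα.1.le
        rw [abs_le]
        constructor <;> linarith [hτ.1, hτ.2])
    simpa [abs_of_pos hd0] using this
  have h0 : ∀ j, ∫ ω, φ j (ξ j ω) ∂P = 0 := by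
    intro j
    rw [← integral_map (hξmeas j).aemeasurable (hφ j).aestronglyMeasurable, hξunif j,
      integral_Icc_eq_integral_Ioc, ← intervalIntegral.integral_of_le zero_le_one]
    simp only [φ]
    rw [intervalIntegral.integral_sub
      ((by fun_prop : Continuous _).intervalIntegrable _ _) (by simp),
      intervalIntegral.integral_smul]
    simp_rw [mul_comm _ d]
    rw [intervalIntegral.smul_integral_comp_add_mul]
    simp
  have key := rrs_sum_sq P N ξ hξmeas hξindep φ hφ (L * d ^ α * d)
    (fun j => by filter_upwards [hmem j] with ω hω using hbd j _ hω) h0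
  have e1 : ∀ ω, (∑ j : Fin N, d • f ((j : ℝ) * d + ξ j ω * d)) - ∫ τ in (0:ℝ)..T, f τ
      = ∑ j, φ j (ξ j ω) := by
    intro ω
    rw [← hsum, ← Finset.sum_sub_distrib]
  simp_rw [e1]
  refine key.trans (le_of_eq ?_)
  rw [Real.rpow_add hd0, Real.rpow_one, mul_comm 2 α, Real.rpow_mul hd0.le, ← hd]
  norm_cast
  ring

/-- Stratified randomized Riemann-sum quadrature estimate for a Hölder
continuous integrand `f : [0,T] → H`: with independent uniform nodes
`t_{j-1} + ξ_j Δt`, the mean-square quadrature error is at most `T L² Δt^{1+2α}`. -/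
theorem randomized_riemann_sum_holder
    {Ω H : Type*} {mΩ : MeasurableSpace Ω} (P : Measure Ω) [IsProbabilityMeasure P]
    [NormedAddCommGroup H] [InnerProductSpace ℝ H] [CompleteSpace H]
    [SecondCountableTopology H]
    (T : ℝ) (hT : 0 < T) (N : ℕ) (hN : 1 ≤ N)
    (f : ℝ → H) (L α : ℝ) (hL : 0 ≤ L) (hα : α ∈ Set.Ioc (0:ℝ) 1)
    (hf : ∀ s ∈ Set.Icc (0:ℝ) T, ∀ t ∈ Set.Icc (0:ℝ) T, ‖f s - f t‖ ≤ L * |s - t| ^ α)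
    (ξ : Fin N → Ω → ℝ) (hξmeas : ∀ j, Measurable (ξ j))
    (hξindep : iIndepFun ξ P)
    (hξunif : ∀ j, Measure.map (ξ j) P = (volume : Measure ℝ).restrict (Set.Icc 0 1)) :
    ∫ ω, ‖(∑ j : Fin N, (T / N) • f ((j : ℝ) * (T / N) + ξ j ω * (T / N)))
        - ∫ τ in (0:ℝ)..T, f τ‖ ^ 2 ∂P
      ≤ T * L ^ 2 * (T / N) ^ (1 + 2 * α) := by
  have hN0 : (0:ℝ) < N := by exact_mod_cast hN
  have hd0 : 0 < T / N := by positivity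
  have hd : N * (T / N) = T := by field_simp
  have hmem : ∀ j, ∀ᵐ ω ∂P, ξ j ω ∈ Set.Icc (0:ℝ) 1 := by
    intro j
    refine ae_of_ae_map (hξmeas j).aemeasurable (p := fun x => x ∈ Set.Icc (0:ℝ) 1) ?_
    rw [hξunif j]
    exact ae_restrict_mem measurableSet_Icc
  have hcon := rrs_continuousOn T f L α hα.1 hf
  let g : ℝ → H := Set.IccExtend hT.le (Set.domRestrict (Set.Icc 0 T) f)
  have hgc : Continuous g := (continuousOn_iff_continuous_domRestrict.1 hcon).Icc_extend'
  have hg : ∀ x ∈ Set.Icc (0:ℝ) T, g x = f x := fun x hx => by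
    simp only [g]
    rw [Set.IccExtend_of_mem _ _ hx]
    rfl
  have key := rrs_cont P T hT N hN g hgc L α hL hα
    (fun s hs t ht => by rw [hg s hs, hg t ht]; exact hf s hs t ht)
    ξ hξmeas hξindep hξunif hmem (T / N) hd0 hd
  have hI : ∫ τ in (0:ℝ)..T, g τ = ∫ τ in (0:ℝ)..T, f τ := by
    refine intervalIntegral.integral_congr fun x hx => hg x ?_
    rwa [Set.uIcc_of_le hT.le] at hx
  rw [hI] at key
  refine le_trans (le_of_eq (integral_congr_ae ?_)) key
  filter_upwards [ae_all_iff.2 hmem] with ω hω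
  have : ∀ j : Fin N, g ((j : ℝ) * (T / N) + ξ j ω * (T / N))
      = f ((j : ℝ) * (T / N) + ξ j ω * (T / N)) := by
    intro j
    have h1 : ((j : ℝ) + 1) ≤ N := by exact_mod_cast j.2
    have h2 := hω j
    have h3 : (0:ℝ) ≤ j := by positivity
    refine hg _ ⟨by nlinarith [h2.1], ?_⟩
    calc _ = ((j : ℝ) + ξ j ω) * (T / N) := by ring
      _ ≤ N * (T / N) := by
        refine mul_le_mul_of_nonneg_right ?_ hd0.le
        linarith [h2.2]
      _ = T := hd
  simp_rw [this]
end

section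
/- Let H be a separable real Hilbert space, let T > 0 and N ∈ ℕ with N ≥ 1, set Δt := T/N and t_j := j·Δt, and let f : [0, T] → H be Bochner measurable with ∫_0^T ‖f(τ)‖² dτ < ∞. Let ξ_1, …, ξ_N be independent random variables on a probability space (Ω, F, P), each uniformly distributed on [0, 1]. Then E[‖∑_{j=1}^{N} Δt · f(t_{j−1} + ξ_j Δt) − ∫_0^T f(τ) dτ‖²] ≤ Δt · ∫_0^T ‖f(τ)‖² dτ. -/
open MeasureTheory ProbabilityTheory

theorem aux_inner_integrable {Ω H : Type*} {mΩ : MeasurableSpace Ω} (P : Measure Ω)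
    [NormedAddCommGroup H] [InnerProductSpace ℝ H]
    (X Y : Ω → H) (hX : MemLp X 2 P) (hY : MemLp Y 2 P) :
    Integrable (fun ω => inner ℝ (X ω) (Y ω)) P := by
  have hX2 := (memLp_two_iff_integrable_sq_norm hX.1).1 hX
  have hY2 := (memLp_two_iff_integrable_sq_norm hY.1).1 hY
  refine (hX2.add hY2).mono' (hX.1.inner hY.1) (Filter.Eventually.of_forall fun ω => ?_)
  have h := norm_inner_le_norm (𝕜 := ℝ) (X ω) (Y ω)
  simp only [Pi.add_apply]
  nlinarith [sq_nonneg (‖X ω‖ - ‖Y ω‖), sq_nonneg (‖X ω‖), sq_nonneg (‖Y ω‖)]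

theorem aux_center {Ω H : Type*} {mΩ : MeasurableSpace Ω} (P : Measure Ω) [IsProbabilityMeasure P]
    [NormedAddCommGroup H] [InnerProductSpace ℝ H] [CompleteSpace H]
    (X : Ω → H) (hX : MemLp X 2 P) :
    ∫ ω, inner ℝ (X ω - ∫ ω', X ω' ∂P) (X ω - ∫ ω', X ω' ∂P) ∂P ≤ ∫ ω, ‖X ω‖ ^ 2 ∂P := by
  set m := ∫ ω', X ω' ∂P with hm
  have hi : Integrable X P := hX.integrable one_le_two
  have hX2 := (memLp_two_iff_integrable_sq_norm hX.1).1 hX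
  have hin : Integrable (fun ω => inner ℝ m (X ω)) P := hi.const_inner m
  have e : ∀ ω, inner ℝ (X ω - m) (X ω - m) = ‖X ω‖ ^ 2 - 2 * inner ℝ m (X ω) + ‖m‖ ^ 2 := by
    intro ω
    rw [real_inner_self_eq_norm_sq, norm_sub_sq_real, real_inner_comm]
  have hs : Integrable (fun ω => ‖X ω‖ ^ 2 - 2 * inner ℝ m (X ω)) P := hX2.sub (hin.const_mul 2)
  simp_rw [e]
  rw [integral_add hs (integrable_const _),
    integral_sub hX2 (hin.const_mul 2), integral_const_mul, integral_inner hi, ← hm,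
    real_inner_self_eq_norm_sq]
  simp
  nlinarith [sq_nonneg ‖m‖]

theorem aux_var {Ω H : Type*} {mΩ : MeasurableSpace Ω} (P : Measure Ω) [IsProbabilityMeasure P]
    [NormedAddCommGroup H] [InnerProductSpace ℝ H] [CompleteSpace H] 
    {N : ℕ} (ξ : Fin N → Ω → ℝ) (hξ : ∀ j, Measurable (ξ j)) (hind : iIndepFun ξ P)
    (g : Fin N → ℝ → H) (hg : ∀ j, StronglyMeasurable (g j))
    (hX : ∀ j, MemLp (fun ω => g j (ξ j ω)) 2 P) :
    ∫ ω, ‖∑ j, g j (ξ j ω) - ∑ j, ∫ ω', g j (ξ j ω') ∂P‖ ^ 2 ∂P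
      ≤ ∑ j, ∫ ω, ‖g j (ξ j ω)‖ ^ 2 ∂P := by
  set m : Fin N → H := fun j => ∫ ω', g j (ξ j ω') ∂P with hm
  have hY : ∀ j, MemLp (fun ω => g j (ξ j ω) - m j) 2 P := fun j => (hX j).sub (memLp_const _)
  have hzero : ∀ j, ∫ ω, (g j (ξ j ω) - m j) ∂P = 0 := by
    intro j
    rw [integral_sub ((hX j).integrable one_le_two) (integrable_const _)]
    simp [hm]
  have e : ∀ ω, ‖∑ j, g j (ξ j ω) - ∑ j, m j‖ ^ 2
      = ∑ i, ∑ j, inner ℝ (g i (ξ i ω) - m i) (g j (ξ j ω) - m j) := by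
    intro ω
    rw [← Finset.sum_sub_distrib, ← real_inner_self_eq_norm_sq, sum_inner]
    simp_rw [inner_sum]
  have hint : ∀ i j, Integrable
      (fun ω => inner ℝ (g i (ξ i ω) - m i) (g j (ξ j ω) - m j)) P :=
    fun i j => aux_inner_integrable P _ _ (hY i) (hY j)
  simp_rw [e]
  rw [integral_finsetSum _ (fun i _ => integrable_finsetSum _ (fun j _ => hint i j))]
  refine Finset.sum_le_sum fun i _ => ?_
  rw [integral_finsetSum _ (fun j _ => hint i j), Finset.sum_eq_single i]
  · exact aux_center P _ (hX i)
  · intro j _ hji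
    have hm' : ∀ k, Integrable (fun x => g k x - m k) (P.map (ξ k)) := fun k =>
      (integrable_map_measure ((hg k).sub stronglyMeasurable_const).aestronglyMeasurable
        (hξ k).aemeasurable).2 ((hY k).integrable one_le_two)
    have : ∫ ω, inner ℝ (g i (ξ i ω) - m i) (g j (ξ j ω) - m j) ∂P
        = inner ℝ (∫ ω, (g i (ξ i ω) - m i) ∂P) (∫ ω, (g j (ξ j ω) - m j) ∂P) :=
      (hind.indepFun hji.symm).integral_bilin_comp_comp (hξ i).aemeasurable
      (hξ j).aemeasurable (hm' i) (hm' j) (innerSL ℝ (E := H))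
    rw [this, hzero, inner_zero_left]
  · simp

theorem aux_int {Ω E : Type*} {mΩ : MeasurableSpace Ω} (P : Measure Ω) 
    [NormedAddCommGroup E] [NormedSpace ℝ E]
    (X : Ω → ℝ) (hX : Measurable X)
    (hu : Measure.map X P = (volume : Measure ℝ).restrict (Set.Icc 0 1))
    (f : ℝ → E) (hf : StronglyMeasurable f) (a h : ℝ) (hh : 0 < h) :
    ∫ ω, f (a + X ω * h) ∂P = h⁻¹ • ∫ τ in a..(a + h), f τ := by
  have hm : StronglyMeasurable (fun x : ℝ => f (a + x * h)) := hf.comp_measurable (by fun_prop)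
  rw [← integral_map (φ := X) (f := fun x => f (a + x * h)) hX.aemeasurable
    hm.aestronglyMeasurable, hu, integral_Icc_eq_integral_Ioc,
    ← intervalIntegral.integral_of_le zero_le_one]
  have := intervalIntegral.integral_comp_add_mul (a := 0) (b := 1) f hh.ne' a
  simpa [mul_comm] using this

theorem aux_integrable {Ω E : Type*} {mΩ : MeasurableSpace Ω} (P : Measure Ω) 
    [NormedAddCommGroup E] [NormedSpace ℝ E]
    (X : Ω → ℝ) (hX : Measurable X)
    (hu : Measure.map X P = (volume : Measure ℝ).restrict (Set.Icc 0 1))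
    (f : ℝ → E) (hf : StronglyMeasurable f) (a h : ℝ) (hh : 0 < h)
    (hfi : IntervalIntegrable f volume a (a + h)) :
    Integrable (fun ω => f (a + X ω * h)) P := by
  have hm : StronglyMeasurable (fun x : ℝ => f (a + x * h)) := hf.comp_measurable (by fun_prop)
  refine (integrable_map_measure (g := fun x : ℝ => f (a + x * h)) hm.aestronglyMeasurable
    hX.aemeasurable).1 ?_
  rw [hu]
  have h1 := (hfi.comp_add_left a).comp_mul_right (c := h)
  simp only [sub_self, zero_div, add_sub_cancel_left, div_self hh.ne'] at h1
  exact (intervalIntegrable_iff_integrableOn_Icc_of_le zero_le_one).1 h1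

theorem aux_sum {E : Type*} [NormedAddCommGroup E] [NormedSpace ℝ E] (g : ℝ → E) (T h : ℝ) (N : ℕ)
    (hNh : (N : ℝ) * h = T)
    (hsub : ∀ k : ℕ, k < N → Set.uIcc ((k : ℝ) * h) ((k : ℝ) * h + h) ⊆ Set.uIcc 0 T)
    (hg : IntervalIntegrable g volume 0 T) :
    ∑ j : Fin N, ∫ τ in ((j : ℝ) * h)..((j : ℝ) * h + h), g τ = ∫ τ in (0:ℝ)..T, g τ := by
  rw [Finset.sum_fin_eq_sum_range]
  have := intervalIntegral.sum_integral_adjacent_intervals (f := g) (μ := volume)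
    (a := fun k : ℕ => (k : ℝ) * h) (n := N) (fun k hk => by
      have := hg.mono_set (hsub k hk)
      simpa [add_mul] using this)
  simp only [Nat.cast_zero, zero_mul, hNh] at this
  rw [← this]
  refine Finset.sum_congr rfl fun k hk => ?_
  rw [dif_pos (Finset.mem_range.1 hk)]
  simp [add_mul]

/-- Basic L²-variance bound for the randomized Riemann sum with independent
uniform nodes: the mean-square quadrature error is at most `Δt ∫₀^T ‖f(τ)‖² dτ`. -/
theorem randomized_riemann_sum_variance
    {Ω H : Type*} {mΩ : MeasurableSpace Ω} (P : Measure Ω) [IsProbabilityMeasure P]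
    [NormedAddCommGroup H] [InnerProductSpace ℝ H] [CompleteSpace H]
    [SecondCountableTopology H]
    (T : ℝ) (hT : 0 < T) (N : ℕ) (hN : 1 ≤ N)
    (f : ℝ → H) (hfmeas : StronglyMeasurable f)
    (hfL2 : IntervalIntegrable (fun τ => ‖f τ‖ ^ 2) volume 0 T)
    (ξ : Fin N → Ω → ℝ) (hξmeas : ∀ j, Measurable (ξ j))
    (hξindep : iIndepFun ξ P)
    (hξunif : ∀ j, Measure.map (ξ j) P = (volume : Measure ℝ).restrict (Set.Icc 0 1)) :
    ∫ ω, ‖(∑ j : Fin N, (T / N) • f ((j : ℝ) * (T / N) + ξ j ω * (T / N)))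
        - ∫ τ in (0:ℝ)..T, f τ‖ ^ 2 ∂P
      ≤ (T / N) * ∫ τ in (0:ℝ)..T, ‖f τ‖ ^ 2 := by
  have hN0 : (0 : ℝ) < N := by exact_mod_cast hN
  obtain ⟨h, hh⟩ : ∃ h, h = T / N := ⟨_, rfl⟩
  have hpos : 0 < h := by rw [hh]; positivity
  have hNh : (N : ℝ) * h = T := by rw [hh]; field_simp
  rw [← hh]
  have hf1 : IntervalIntegrable f volume 0 T := by
    rw [intervalIntegrable_iff_integrableOn_Ioc_of_le hT.le] at hfL2 ⊢
    have : IsFiniteMeasure (volume.restrict (Set.Ioc 0 T)) := inferInstance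
    exact ((memLp_two_iff_integrable_sq_norm hfmeas.aestronglyMeasurable).2 hfL2).integrable
      one_le_two
  have hsub : ∀ k : ℕ, k < N → Set.uIcc ((k : ℝ) * h) ((k : ℝ) * h + h) ⊆ Set.uIcc 0 T := by
    intro k hk
    have hk' : (k : ℝ) + 1 ≤ N := by exact_mod_cast hk
    have h0 : 0 ≤ (k : ℝ) * h := by positivity
    rw [Set.uIcc_of_le (by linarith), Set.uIcc_of_le hT.le]
    exact Set.Icc_subset_Icc h0 (by rw [← hNh]; nlinarith)
  have hsq : StronglyMeasurable (fun τ => ‖f τ‖ ^ 2) := hfmeas.norm.pow 2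
  have key := aux_var P ξ hξmeas hξindep (fun j x => h • f ((j : ℝ) * h + x * h))
    (fun j => (hfmeas.comp_measurable (by fun_prop)).const_smul h) (fun j => by
      refine MemLp.const_smul ?_ h
      have hj := hξmeas j
      have hsm : StronglyMeasurable (fun ω => f ((j : ℝ) * h + ξ j ω * h)) :=
        hfmeas.comp_measurable (by fun_prop)
      rw [memLp_two_iff_integrable_sq_norm hsm.aestronglyMeasurable]
      exact aux_integrable P (ξ j) (hξmeas j) (hξunif j) (fun τ => ‖f τ‖ ^ 2) hsq _ h hpos
        (hfL2.mono_set (hsub j j.2)))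
  have e1 : ∀ j : Fin N, ∫ ω, h • f ((j : ℝ) * h + ξ j ω * h) ∂P
      = ∫ τ in ((j : ℝ) * h)..((j : ℝ) * h + h), f τ := by
    intro j
    rw [integral_smul, aux_int P (ξ j) (hξmeas j) (hξunif j) f hfmeas _ h hpos, smul_smul,
      mul_inv_cancel₀ hpos.ne', one_smul]
  have e2 : ∀ j : Fin N, ∫ ω, ‖h • f ((j : ℝ) * h + ξ j ω * h)‖ ^ 2 ∂P
      = h * ∫ τ in ((j : ℝ) * h)..((j : ℝ) * h + h), ‖f τ‖ ^ 2 := by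
    intro j
    simp_rw [norm_smul, mul_pow]
    rw [integral_const_mul, aux_int P (ξ j) (hξmeas j) (hξunif j) (fun τ => ‖f τ‖ ^ 2) hsq _ h hpos,
      smul_eq_mul, ← mul_assoc, Real.norm_eq_abs, sq_abs]
    congr 1
    field_simp
  simp only [e1, e2] at key
  rw [aux_sum f T h N hNh hsub hf1, ← Finset.mul_sum] at key
  have hs2 : ∑ j : Fin N, ∫ τ in ((j : ℝ) * h)..((j : ℝ) * h + h), ‖f τ‖ ^ 2
      = ∫ τ in (0:ℝ)..T, ‖f τ‖ ^ 2 :=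
    aux_sum _ T h N hNh hsub hfL2
  rw [hs2] at key
  exact key
end
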